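/- arXiv:2201.04462 — 3 statements merged into one kernel-verified Lean document; each statement's English description precedes it below -/
import Mathlib

section
/- Let f : ℝⁿ → ℝⁿ satisfy f(cx) = c f(x) for all c ≠ 0 and f(z) ≠ 0 for all z ≠ 0. Let x be a unit vector with f(x) = λx for some λ ≠ 0, suppose f is differentiable at x with total derivative represented by the matrix J ∈ ℝ^{n×n}, and let O ∈ ℝ^{n×(n−1)} be a matrix whose columns form an orthonormal basis of the orthogonal complement of x. If every complex eigenvalue of the (n−1)×(n−1) matrix (1/λ) OᵀJO has modulus strictly less than 1 (i.e., this matrix is Schur), then the o-line span{x} ∖ {0} is locally attractive for f. -/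
open Matrix Filter

lemma aux_iter {E : Type*} [NormedAddCommGroup E] [NormedSpace ℝ E] (G : E → E) (x : E)
    (D : E →L[ℝ] E) (hG : HasFDerivAt G D x) (hx : G x = x)
    (hD : Tendsto (fun k => D ^ (k+1)) atTop (nhds 0)) :
    ∀ᶠ z in nhds x, Tendsto (fun k => G^[k] z) atTop (nhds x) := by
  have h1 : ∀ᶠ k in atTop, ‖D ^ (k+1)‖ < 1/4 := by
    have := hD.norm
    rw [norm_zero] at this
    exact this.eventually_lt_const (by norm_num)
  obtain ⟨k0, hk0⟩ := h1.exists
  set m := k0 + 1 with hm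
  have hmpos : 0 < m := by omega
  have hder : HasFDerivAt G^[m] (D ^ m) x := hG.iterate hx m
  have hfix : ∀ j, G^[j] x = x := fun j => Function.iterate_fixed hx j
  have hc : ∀ᶠ z in nhds x, ‖G^[m] z - x‖ ≤ (1/2) * ‖z - x‖ := by
    have := hder.isLittleO.def (c := 1/4) (by norm_num)
    filter_upwards [this] with z hz
    rw [hfix] at hz
    have h2 : ‖(D ^ m) (z - x)‖ ≤ 1/4 * ‖z - x‖ :=
      ((D^m).le_opNorm _).trans (by gcongr)
    have h3 : G^[m] z - x = (G^[m] z - x - (D ^ m) (z - x)) + (D^m) (z-x) := by abel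
    rw [h3]
    refine (norm_add_le _ _).trans ?_
    linarith
  obtain ⟨δ, hδ, hball⟩ := Metric.eventually_nhds_iff_ball.1 hc
  filter_upwards [Metric.ball_mem_nhds x hδ] with z hz
  have hp : ∀ p, ‖(G^[m])^[p] z - x‖ ≤ (1/2)^p * ‖z - x‖ := by
    intro p
    induction p with
    | zero => simp
    | succ p ih =>
      rw [Function.iterate_succ_apply']
      have h4 : (G^[m])^[p] z ∈ Metric.ball x δ := by
        rw [mem_ball_iff_norm] at hz ⊢
        refine lt_of_le_of_lt ih (lt_of_le_of_lt ?_ hz)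
        exact mul_le_of_le_one_left (norm_nonneg _) (pow_le_one₀ (by norm_num) (by norm_num))
      refine (hball _ h4).trans ?_
      rw [pow_succ]
      nlinarith
  have ht : Tendsto (fun p => (G^[m])^[p] z) atTop (nhds x) := by
    rw [tendsto_iff_norm_sub_tendsto_zero]
    refine squeeze_zero (fun _ => norm_nonneg _) hp ?_
    have := (tendsto_pow_atTop_nhds_zero_of_lt_one (r := (1/2:ℝ)) (by norm_num) (by norm_num)).mul_const ‖z-x‖
    simpa using this
  intro V hV
  have hcont : ∀ j, ∀ᶠ w in nhds x, G^[j] w ∈ V := by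
    intro j
    have : ContinuousAt G^[j] x := (hG.iterate hx j).continuousAt
    apply this
    rwa [hfix]
  have hall : ∀ᶠ w in nhds x, ∀ j ∈ Finset.range m, G^[j] w ∈ V :=
    (Finset.eventually_all _).2 fun j _ => hcont j
  have hev := (Nat.tendsto_div_const_atTop (Nat.pos_iff_ne_zero.1 hmpos)).eventually (ht.eventually hall)
  rw [mem_map]
  filter_upwards [hev] with k hk
  have := hk (k % m) (Finset.mem_range.2 (Nat.mod_lt _ hmpos))
  rw [← Function.iterate_mul, ← Function.iterate_add_apply, Nat.mod_add_div] at this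
  exact this

lemma aux_gelfand {A : Type*} [NormedRing A] [NormedAlgebra ℂ A] [CompleteSpace A] (a : A)
    (h : ∀ μ ∈ spectrum ℂ a, ‖μ‖ < 1) : Tendsto (fun k : ℕ => a ^ k) atTop (nhds 0) := by
  have hr : spectralRadius ℂ a < 1 := by
    rcases (spectrum ℂ a).eq_empty_or_nonempty with he | hne
    · simp [spectralRadius, he]
    · have := spectrum.spectralRadius_lt_of_forall_lt_of_nonempty (𝕜 := ℂ) hne (r := 1) (fun k hk => h k hk)
      simpa using this
  obtain ⟨q, hq1, hq2⟩ := ENNReal.lt_iff_exists_nnreal_btwn.1 hr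
  have hq2' : q < 1 := by exact_mod_cast hq2
  have ht := (spectrum.pow_nnnorm_pow_one_div_tendsto_nhds_spectralRadius a).eventually_lt_const hq1
  rw [tendsto_zero_iff_norm_tendsto_zero]
  refine squeeze_zero' (g := fun k => (q:ℝ)^k) (Eventually.of_forall fun _ => norm_nonneg _) ?_
    (tendsto_pow_atTop_nhds_zero_of_lt_one q.2 (by exact_mod_cast hq2'))
  filter_upwards [ht, eventually_gt_atTop 0] with k hk hk0
  have hk' : (0:ℝ) < k := by exact_mod_cast hk0
  have := ENNReal.rpow_le_rpow hk.le hk'.le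
  rw [← ENNReal.rpow_mul, one_div_mul_cancel hk'.ne', ENNReal.rpow_one, ENNReal.rpow_natCast] at this
  have h2 : ‖a^k‖₊ ≤ q^k := by exact_mod_cast this
  exact_mod_cast h2

lemma aux_mat {m : ℕ} (A : Matrix (Fin m) (Fin m) ℝ)
    (h : ∀ μ ∈ spectrum ℂ (A.map Complex.ofReal), ‖μ‖ < 1) :
    Tendsto (fun k : ℕ => A ^ k) atTop (nhds 0) := by
  have h1 : Tendsto (fun k : ℕ => (A.map Complex.ofReal) ^ k) atTop (nhds 0) := by
    let := Matrix.linftyOpNormedRing (n := Fin m) (α := ℂ)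
    let := Matrix.linftyOpNormedAlgebra (n := Fin m) (R := ℂ) (α := ℂ)
    have : CompleteSpace (Matrix (Fin m) (Fin m) ℂ) := FiniteDimensional.complete ℂ _
    exact aux_gelfand _ h
  have h2 : Continuous fun M : Matrix (Fin m) (Fin m) ℂ => M.map Complex.re :=
    continuous_id.matrix_map Complex.continuous_re
  have h3 := (h2.tendsto 0).comp h1
  have h4 : (0 : Matrix (Fin m) (Fin m) ℂ).map Complex.re = 0 := by ext; simp
  rw [h4] at h3
  refine h3.congr fun k => ?_
  have h5 : (A.map Complex.ofReal)^k = (A^k).map Complex.ofReal :=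
    (map_pow (Complex.ofRealHom.mapMatrix (m := Fin m)) A k).symm
  simp only [Function.comp]
  rw [h5]
  ext; simp

lemma aux_T {E : Type*} [NormedAddCommGroup E] [InnerProductSpace ℝ E] {m : ℕ}
    (c : Fin m → E) (hc : Orthonormal ℝ c) (A : Matrix (Fin m) (Fin m) ℝ)
    (hA : Tendsto (fun k : ℕ => A ^ k) atTop (nhds 0)) (D : E →L[ℝ] E)
    (hD : ∀ h, D h = ∑ i, (∑ j, A i j * inner ℝ (c j) h) • c i) :
    Tendsto (fun k : ℕ => D ^ (k+1)) atTop (nhds 0) := by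
  let T : Matrix (Fin m) (Fin m) ℝ → (E →L[ℝ] E) := fun B =>
    ∑ i, ∑ j, B i j • (innerSL ℝ (c j)).smulRight (c i)
  have hT : ∀ B h, T B h = ∑ i, (∑ j, B i j * inner ℝ (c j) h) • c i := by
    intro B h
    simp [T, Finset.sum_smul, mul_smul]
  have hpow : ∀ k, D ^ (k+1) = T (A ^ (k+1)) := by
    intro k
    induction k with
    | zero => ext1 h; simp only [zero_add, pow_one]; rw [hT, hD]
    | succ k ih =>
      rw [pow_succ' D, ih, pow_succ' A (k+1)]
      ext1 h
      rw [mul_apply_eq_comp, hD, hT, hT]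
      refine Finset.sum_congr rfl fun i _ => ?_
      congr 1
      simp only [hc.inner_right_fintype]
      simp only [Matrix.mul_apply, Finset.sum_mul, Finset.mul_sum]
      rw [Finset.sum_comm]
      simp only [mul_assoc]
  have hcont : Continuous T := by
    refine continuous_finsetSum _ fun i _ => continuous_finsetSum _ fun j _ => ?_
    exact (continuous_id.matrix_elem i j).smul continuous_const
  have h0 : T 0 = 0 := by simp [T]
  have := (hcont.tendsto 0).comp (hA.comp (tendsto_add_atTop_nat 1))
  rw [h0] at this
  exact this.congr fun k => (hpow k).symm

/-- let `f : ℝⁿ → ℝⁿ` be homogeneous (`f(cx) = c f(x)`, `c ≠ 0`) and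
nonvanishing away from `0`, let `x` be a unit vector with `f(x) = λ x`, `λ ≠ 0`,
let `f` be differentiable at `x` with derivative `J`, and let the columns
`c 0, …, c (n-2)` form an orthonormal basis of the orthogonal complement of `x`.
If the `(n-1)×(n-1)` matrix `(1/λ) OᵀJO` (entries `(1/λ)⟪c i, J (c j)⟫`) is Schur,
then the o-line `span{x} ∖ {0}` is locally attractive. -/
theorem fixed_oline_locally_attractive
    {n : ℕ} (hn : 1 ≤ n)
    (f : EuclideanSpace ℝ (Fin n) → EuclideanSpace ℝ (Fin n))
    (hhom : ∀ (a : ℝ), a ≠ 0 → ∀ z, f (a • z) = a • f z)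
    (hnz : ∀ z : EuclideanSpace ℝ (Fin n), z ≠ 0 → f z ≠ 0)
    (x : EuclideanSpace ℝ (Fin n)) (hx : ‖x‖ = 1)
    (lam : ℝ) (hlam : lam ≠ 0) (hfx : f x = lam • x)
    (J : EuclideanSpace ℝ (Fin n) →L[ℝ] EuclideanSpace ℝ (Fin n))
    (hJ : HasFDerivAt f J x)
    (c : Fin (n - 1) → EuclideanSpace ℝ (Fin n))
    (hortho : Orthonormal ℝ c)
    (hperp : ∀ j, (inner ℝ (c j) x : ℝ) = 0)
    (Jred : Matrix (Fin (n - 1)) (Fin (n - 1)) ℝ)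
    (hJred : ∀ i j, Jred i j = (inner ℝ (c i) (J (c j)) : ℝ))
    (hSchur : ∀ μ ∈ spectrum ℂ ((lam⁻¹ • Jred).map (Complex.ofReal)), ‖μ‖ < 1) :
    ∃ ε > 0, ∀ y : EuclideanSpace ℝ (Fin n), y ≠ 0 →
      min ‖‖y‖⁻¹ • y - x‖ ‖‖y‖⁻¹ • y + x‖ < ε →
      (∀ k : ℕ, f^[k] y ≠ 0) ∧
      Tendsto (fun k : ℕ =>
          min ‖‖f^[k] y‖⁻¹ • f^[k] y - x‖ ‖‖f^[k] y‖⁻¹ • f^[k] y + x‖)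
        atTop (nhds 0) := by
  have hf0 : f 0 = 0 := by
    have h := hhom 2 two_ne_zero 0
    rw [smul_zero, two_smul] at h
    simpa using h
  have hhom' : ∀ (a : ℝ) z, f (a • z) = a • f z := by
    intro a z
    rcases eq_or_ne a 0 with rfl | ha
    · simp [hf0]
    · exact hhom a ha z
  have hxx : (inner ℝ x x : ℝ) = 1 := by simp [hx]
  have hJx : J x = lam • x := by
    have h1 : HasDerivAt (fun t : ℝ => f (t • x)) (J ((1:ℝ) • x)) 1 := by
      have h2 : HasDerivAt (fun t : ℝ => t • x) ((1:ℝ) • x) 1 := (hasDerivAt_id (1:ℝ)).smul_const x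
      have hJ' : HasFDerivAt f J ((1:ℝ) • x) := by simpa using hJ
      exact hJ'.comp_hasDerivAt (1:ℝ) h2
    have h3 : HasDerivAt (fun t : ℝ => f (t • x)) ((1:ℝ) • f x) 1 := by
      simp only [hhom']
      exact (hasDerivAt_id (1:ℝ)).smul_const (f x)
    have := h1.unique h3
    simpa [hfx] using this
  -- expansion in the orthonormal basis
  have hexp : ∀ h : EuclideanSpace ℝ (Fin n), h = (inner ℝ x h : ℝ) • x + ∑ i, (inner ℝ (c i) h : ℝ) • c i := by
    intro h
    let v : Option (Fin (n-1)) → EuclideanSpace ℝ (Fin n) := fun o => o.elim x c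
    have hv : Orthonormal ℝ v := by
      rw [orthonormal_iff_ite] at hortho ⊢
      rintro (_ | i) (_ | j)
      · simp [v, hx]
      · simpa [v, real_inner_comm] using hperp j
      · simpa [v] using hperp i
      · simpa [v] using hortho i j
    have hcard : Fintype.card (Option (Fin (n-1))) = Module.finrank ℝ (EuclideanSpace ℝ (Fin n)) := by
      simp; omega
    have hsp : ⊤ ≤ Submodule.span ℝ (Set.range v) :=
      (hv.linearIndependent.span_eq_top_of_card_eq_finrank' hcard).ge
    have := (OrthonormalBasis.mk hv hsp).sum_repr' h
    rw [Fintype.sum_option] at this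
    simpa [v] using this.symm
  let G : EuclideanSpace ℝ (Fin n) → EuclideanSpace ℝ (Fin n) := fun z => (inner ℝ x (f z) : ℝ)⁻¹ • f z
  have hifx : (inner ℝ x (f x) : ℝ) = lam := by rw [hfx, inner_smul_right, hxx, mul_one]
  have hGx : G x = x := by
    simp only [G]
    rw [hifx, hfx, smul_smul, inv_mul_cancel₀ hlam, one_smul]
  obtain ⟨D, hD, hDer⟩ : ∃ D : EuclideanSpace ℝ (Fin n) →L[ℝ] EuclideanSpace ℝ (Fin n),
      (∀ h, D h = lam⁻¹ • (J h - (inner ℝ x (J h) : ℝ) • x)) ∧ HasFDerivAt G D x := by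
    have h1 : HasFDerivAt (fun z => (inner ℝ x (f z) : ℝ)) ((innerSL ℝ x).comp J) x :=
      (innerSL ℝ x).hasFDerivAt.comp x hJ
    have h2 := (hasDerivAt_inv (x := (inner ℝ x (f x) : ℝ)) (by rwa [hifx])).comp_hasFDerivAt x h1
    refine ⟨_, ?_, h2.smul hJ⟩
    intro h
    have e : (inner ℝ x (lam • x) : ℝ) = lam := by rw [← hfx]; exact hifx
    simp [hfx, e]
    rw [smul_sub, sub_eq_add_neg, smul_smul, smul_smul, ← neg_smul, ← neg_smul]
    congr 2
    field_simp
  have hDx : D x = 0 := by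
    rw [hD, hJx, inner_smul_right, hxx]; simp
  have hDA : ∀ h, D h = ∑ i, (∑ j, (lam⁻¹ • Jred) i j * inner ℝ (c j) h) • c i := by
    have key : ∀ h, D h = ∑ i, (lam⁻¹ * inner ℝ (c i) (J h)) • c i := by
      intro h
      rw [hD, sub_eq_of_eq_add' (hexp (J h)), Finset.smul_sum]
      simp only [smul_smul]
    intro h
    have e1 : D h = ∑ j, (inner ℝ (c j) h : ℝ) • D (c j) := by
      conv_lhs => rw [hexp h]
      simp [map_add, hDx]
    rw [e1]
    simp only [key, Finset.smul_sum, smul_smul]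
    rw [Finset.sum_comm]
    refine Finset.sum_congr rfl fun i _ => ?_
    rw [Finset.sum_smul]
    refine Finset.sum_congr rfl fun j _ => ?_
    rw [Matrix.smul_apply, hJred, smul_eq_mul, mul_comm]
  have hconv := aux_iter G x D hDer hGx (aux_T c hortho _ (aux_mat _ hSchur) D hDA)
  obtain ⟨ε, hε, hball⟩ := Metric.eventually_nhds_iff_ball.1 hconv
  -- iterates
  have hiter : ∀ (k : ℕ) z, ∃ a : ℝ, G^[k] z = a • f^[k] z := by
    intro k z
    induction k with
    | zero => exact ⟨1, by simp⟩
    | succ k ih =>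
      obtain ⟨a, ha⟩ := ih
      rw [Function.iterate_succ_apply', Function.iterate_succ_apply', ha]
      simp only [G, hhom' a]
      exact ⟨_, smul_smul _ _ _⟩
  have hfiter : ∀ (k : ℕ) (b : ℝ) z, f^[k] (b • z) = b • f^[k] z := by
    intro k b z
    induction k with
    | zero => rfl
    | succ k ih => rw [Function.iterate_succ_apply', Function.iterate_succ_apply', ih, hhom']
  let d : EuclideanSpace ℝ (Fin n) → ℝ := fun v => min ‖‖v‖⁻¹ • v - x‖ ‖‖v‖⁻¹ • v + x‖
  have hd : ∀ (a : ℝ) v, a ≠ 0 → d (a • v) = d v := by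
    intro a v ha
    have e : ‖a • v‖⁻¹ • a • v = (|a|⁻¹ * a) • (‖v‖⁻¹ • v) := by
      rw [norm_smul, Real.norm_eq_abs, smul_smul, smul_smul]; congr 1; rw [mul_inv]; ring
    simp only [d]
    rw [e]
    rcases lt_or_gt_of_ne ha with h | h
    · have e2 : |a|⁻¹ * a = -1 := by rw [abs_of_neg h]; field_simp
      rw [e2, neg_one_smul, min_comm]
      congr 1
      · rw [← norm_neg]; congr 1; abel
      · rw [← norm_neg]; congr 1; abel
    · have e2 : |a|⁻¹ * a = 1 := by rw [abs_of_pos h]; field_simp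
      rw [e2, one_smul]
  have hx0 : x ≠ 0 := by rintro rfl; simp at hx
  have hdc : Tendsto d (nhds x) (nhds 0) := by
    have h1 : ContinuousAt (fun v : EuclideanSpace ℝ (Fin n) => ‖v‖⁻¹ • v) x :=
      (continuousAt_id.norm.inv₀ (by simp [hx])).smul continuousAt_id
    have h2 : ContinuousAt d x := by
      have h3 : ContinuousAt (fun v : EuclideanSpace ℝ (Fin n) => ‖‖v‖⁻¹ • v - x‖) x := (h1.sub continuousAt_const).norm
      have h4 : ContinuousAt (fun v : EuclideanSpace ℝ (Fin n) => ‖‖v‖⁻¹ • v + x‖) x := (h1.add continuousAt_const).norm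
      exact h3.min h4
    have h5 : d x = 0 := by simp [d, hx]
    rw [← h5]; exact h2
  refine ⟨ε, hε, fun y hy hmin => ⟨?_, ?_⟩⟩
  · intro k
    induction k with
    | zero => exact hy
    | succ k ih => rw [Function.iterate_succ_apply']; exact hnz _ ih
  · obtain ⟨b, hb, hbz⟩ : ∃ b : ℝ, b ≠ 0 ∧ b • y ∈ Metric.ball x ε := by
      have hny : ‖y‖⁻¹ ≠ 0 := inv_ne_zero (norm_ne_zero_iff.2 hy)
      rcases min_lt_iff.1 hmin with h | h
      · exact ⟨_, hny, by rwa [mem_ball_iff_norm]⟩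
      · refine ⟨_, neg_ne_zero.2 hny, ?_⟩
        rw [mem_ball_iff_norm, ← norm_neg]
        have e : -(-‖y‖⁻¹ • y - x) = ‖y‖⁻¹ • y + x := by rw [neg_smul]; abel
        rw [e]; exact h
    have hlim := hball _ hbz
    refine (hdc.comp hlim).congr' ?_
    filter_upwards [hlim.eventually_ne hx0] with k hk
    obtain ⟨a, ha⟩ := hiter k (b • y)
    have ha0 : a ≠ 0 := by
      rintro rfl
      rw [zero_smul] at ha
      exact hk ha
    change d (G^[k] (b • y)) = d (f^[k] y)
    rw [ha, hd a _ ha0, hfiter, hd b _ hb]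
end

section
/- Let Y be a finite set of positive reals, τ : ℝⁿ → Y, M : Y → ℝ^{n×n}, and define the PETC sample map f(x) := M(τ(x)) x and output sequence y_i(x) := τ(f^i(x)). Assume f^i(z) → 0 as i → ∞ for every z ∈ ℝⁿ. Suppose (y_i) is a stable p-periodic output sequence: y_{i+p} = y_i for all i, and there exist x ∈ ℝⁿ and an open neighborhood U of x such that y_i(x') = y_i for every x' ∈ U and every i ∈ ℕ. Then the matrix M̄ := M(y_{p−1})⋯M(y_1)M(y_0) is Schur: every complex eigenvalue of M̄ has modulus strictly less than 1. -/
open Matrix Filter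

/-- Product of the first `i` matrices. -/
theorem aux_prod_succ {n : ℕ} (A : ℕ → Matrix (Fin n) (Fin n) ℝ) (i : ℕ) :
    (List.ofFn (fun j : Fin (i+1) => A j)).reverse.prod
      = A i * (List.ofFn (fun j : Fin i => A j)).reverse.prod := by
  rw [List.ofFn_succ']
  simp [List.concat_eq_append]

/-- for a PETC sample system `f(x) = M(τ(x)) x` with a finite set `Y` of
positive inter-event times, if all state trajectories converge to `0` (implied by GES)
and `(y_i)` is a stable `p`-periodic output sequence, then the cycle matrix
`M̄ = M(y_{p-1})⋯M(y_1)M(y_0)` is Schur (all complex eigenvalues have modulus `< 1`). -/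
theorem stable_periodic_pattern_schur
    {n : ℕ} (Y : Finset ℝ) (hYpos : ∀ s ∈ Y, 0 < s)
    (τ : (Fin n → ℝ) → ℝ) (hτY : ∀ x, τ x ∈ Y)
    (M : ℝ → Matrix (Fin n) (Fin n) ℝ)
    (f : (Fin n → ℝ) → (Fin n → ℝ))
    (hf : ∀ x, f x = (M (τ x)) *ᵥ x)
    (hGES : ∀ z : Fin n → ℝ, Tendsto (fun i : ℕ => f^[i] z) atTop (nhds 0))
    (y : ℕ → ℝ) (p : ℕ) (hp : 1 ≤ p)
    (hper : ∀ i, y (i + p) = y i)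
    (hstable : ∃ (x : Fin n → ℝ) (U : Set (Fin n → ℝ)), IsOpen U ∧ x ∈ U ∧
      ∀ x' ∈ U, ∀ i : ℕ, τ (f^[i] x') = y i)
    (Mbar : Matrix (Fin n) (Fin n) ℝ)
    (hMbar : Mbar = (List.ofFn (fun j : Fin p => M (y j))).reverse.prod) :
    ∀ μ ∈ spectrum ℂ (Mbar.map (Complex.ofReal)), ‖μ‖ < 1 := by
  obtain ⟨x, U, hU, hxU, hτ⟩ := hstable
  let P : ℕ → Matrix (Fin n) (Fin n) ℝ :=
    fun i => (List.ofFn (fun j : Fin i => M (y j))).reverse.prod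
  have hP0 : P 0 = 1 := by simp [P]
  have hPs : ∀ i, P (i+1) = M (y i) * P i := fun i => aux_prod_succ (fun j => M (y j)) i
  have hPf : ∀ x' ∈ U, ∀ i, f^[i] x' = P i *ᵥ x' := by
    intro x' hx' i
    induction i with
    | zero => simp [hP0]
    | succ i ih =>
      rw [Function.iterate_succ_apply', hf, hτ x' hx' i, ih, hPs, Matrix.mulVec_mulVec]
  have hPp : ∀ i, P (i + p) = P i * Mbar := by
    intro i
    induction i with
    | zero => rw [hP0, one_mul, zero_add, hMbar]
    | succ i ih =>
      rw [show i + 1 + p = (i + p) + 1 by ring, hPs, hper, ih, hPs, mul_assoc]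
  have hPk : ∀ k, P (k * p) = Mbar ^ k := by
    intro k
    induction k with
    | zero => simp [hP0]
    | succ k ih => rw [add_mul, one_mul, hPp, ih, pow_succ]
  have hsub : Tendsto (fun k : ℕ => k * p) atTop atTop :=
    tendsto_id.atTop_mul_const' (by omega)
  have hU0 : ∀ x' ∈ U, Tendsto (fun k : ℕ => (Mbar ^ k) *ᵥ x') atTop (nhds 0) := by
    intro x' hx'
    refine ((hGES x').comp hsub).congr fun k => ?_
    simp only [Function.comp]
    rw [hPf x' hx', hPk]
  have hall : ∀ v : Fin n → ℝ, Tendsto (fun k : ℕ => (Mbar ^ k) *ᵥ v) atTop (nhds 0) := by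
    intro v
    have hc : Tendsto (fun e : ℝ => x + e • v) (nhdsWithin 0 {0}ᶜ) (nhds x) := by
      have : Continuous (fun e : ℝ => x + e • v) := by fun_prop
      have h := this.tendsto 0
      simp only [zero_smul, add_zero] at h
      exact h.mono_left nhdsWithin_le_nhds
    obtain ⟨e, he, he0⟩ :=
      ((hc.eventually (hU.mem_nhds hxU)).and self_mem_nhdsWithin).exists
    have he0 : e ≠ 0 := he0
    have h := ((hU0 _ he).sub (hU0 _ hxU)).const_smul e⁻¹
    simp only [sub_zero, smul_zero] at h
    refine h.congr fun k => ?_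
    rw [Matrix.mulVec_add, Matrix.mulVec_smul, add_sub_cancel_left, smul_smul,
      inv_mul_cancel₀ he0, one_smul]
  have hent : ∀ i j, Tendsto (fun k : ℕ => (Mbar ^ k) i j) atTop (nhds 0) := by
    intro i j
    have h := (tendsto_pi_nhds.1 (hall (Pi.single j 1))) i
    simpa using h
  intro μ hμ
  rw [← Matrix.spectrum_toLin', ← Module.End.hasEigenvalue_iff_mem_spectrum] at hμ
  obtain ⟨v, hv⟩ := hμ.exists_hasEigenvector
  have hv0 := hv.2
  have hpow : ∀ k : ℕ, ((Mbar ^ k).map Complex.ofReal) *ᵥ v = μ ^ k • v := by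
    intro k
    have h1 := hv.pow_apply k
    rw [← Matrix.toLin'_pow, Matrix.toLin'_apply] at h1
    rw [← h1]
    congr 1
    exact map_pow (Complex.ofRealHom.mapMatrix) Mbar k
  obtain ⟨i, hi⟩ := Function.ne_iff.1 hv0
  have hi : v i ≠ 0 := hi
  have h0 : Tendsto (fun k : ℕ => μ ^ k * v i) atTop (nhds 0) := by
    have hs : Tendsto (fun k : ℕ => ∑ j, (((Mbar ^ k) i j : ℝ) : ℂ) * v j) atTop
        (nhds (∑ j, ((0 : ℝ) : ℂ) * v j)) :=
      tendsto_finsetSum _ fun j _ =>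
        ((Complex.continuous_ofReal.tendsto 0).comp (hent i j)).mul_const _
    simp only [Complex.ofReal_zero, zero_mul, Finset.sum_const_zero] at hs
    refine hs.congr fun k => ?_
    have := congrFun (hpow k) i
    simpa [Matrix.mulVec, dotProduct] using this
  have h1 : Tendsto (fun k : ℕ => μ ^ k) atTop (nhds 0) := by
    have h := h0.mul_const (v i)⁻¹
    rw [zero_mul] at h
    refine h.congr fun k => ?_
    rw [mul_assoc, mul_inv_cancel₀ hi, mul_one]
  exact tendsto_pow_atTop_nhds_zero_iff_norm_lt_one.1 h1
end

section
/- Let (X, E, H) be a finite transition system: X a finite nonempty type, E : X → X → Prop non-blocking (every x ∈ X has some x' with E x x'), and H : X → Y an output map into a finite type Y. Suppose the system is l-detectable for some l ∈ ℕ. Then its behavioral entropy equals the logarithm of the spectral radius of its incidence matrix: limsup_{n→∞} (log N(n))/n = log λ₁(T), where λ₁(T) is the largest modulus among the complex eigenvalues of T. In particular, limsup_{n→∞} (log N(n))/n = limsup_{n→∞} (log N'(n))/n. -/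
open Filter

/-- A run of length `n` of a transition system with transition relation `E`:
a function `r : Fin n → X` with `E (r i) (r (i+1))` for consecutive indices. -/
def TSIsRun {X : Type*} (E : X → X → Prop) {n : ℕ} (r : Fin n → X) : Prop :=
  ∀ (i : ℕ) (h : i + 1 < n), E (r ⟨i, Nat.lt_of_succ_lt h⟩) (r ⟨i + 1, h⟩)

open Topology

section Helpers

lemma TSIsRun_cons {X : Type*} (E : X → X → Prop) {n : ℕ} (x : X) (r : Fin (n+1) → X) :
    TSIsRun E (Fin.cons x r : Fin (n+2) → X) ↔ E x (r 0) ∧ TSIsRun E r := by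
  constructor
  · intro h
    have h00 := h 0 (by omega)
    refine ⟨h00, fun i hi => h (i+1) (by omega)⟩
  · rintro ⟨h0, h⟩ i hi
    cases i with
    | zero => exact h0
    | succ i => exact h i (by omega)

open Classical in
lemma ts_rowsum {X : Type*} [Fintype X] [DecidableEq X] (E : X → X → Prop) [DecidableRel E]
    (T : Matrix X X ℝ) (hT : ∀ x x' : X, T x x' = if E x x' then 1 else 0) (n : ℕ) (x : X) :
    ∑ y, (T ^ n) x y =
      ∑ r : Fin n → X, if TSIsRun E (Fin.cons x r : Fin (n+1) → X) then (1:ℝ) else 0 := by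
  induction n generalizing x with
  | zero =>
    have : TSIsRun E (Fin.cons x default : Fin 1 → X) := fun i hi => by omega
    rw [Fintype.sum_unique (ι := Fin 0 → X), if_pos this]
    simp [Matrix.one_apply]
  | succ n ih =>
    have h1 : ∑ y, (T ^ (n+1)) x y = ∑ z, T x z * ∑ y, (T ^ n) z y := by
      simp only [pow_succ', Matrix.mul_apply, Finset.mul_sum]
      rw [Finset.sum_comm]
    rw [h1, ← (Fin.consEquiv (fun _ : Fin (n+1) => X)).sum_comp, Fintype.sum_prod_type]
    refine Finset.sum_congr rfl fun z _ => ?_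
    rw [ih z, Finset.mul_sum]
    refine Finset.sum_congr rfl fun r _ => ?_
    simp only [Fin.consEquiv, Equiv.coe_fn_mk, TSIsRun_cons, hT, Fin.cons_zero]
    by_cases h : E x z <;> simp [h]

lemma ts_count {X : Type*} [Fintype X] [DecidableEq X] (E : X → X → Prop) [DecidableRel E]
    (T : Matrix X X ℝ) (hT : ∀ x x' : X, T x x' = if E x x' then 1 else 0) (n : ℕ) :
    (Nat.card {r : Fin (n+1) → X // TSIsRun E r} : ℝ) = ∑ x, ∑ y, (T ^ n) x y := by
  classical
  simp only [ts_rowsum E T hT]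
  rw [Nat.card_eq_fintype_card, Fintype.card_subtype, Finset.natCast_card_filter,
    ← (Fin.consEquiv (fun _ : Fin (n+1) => X)).sum_comp, Fintype.sum_prod_type]
  rfl

lemma ts_nonneg {X : Type*} [Fintype X] [DecidableEq X]
    (T : Matrix X X ℝ) (hT : ∀ x x' : X, 0 ≤ T x x') (n : ℕ) (x y : X) : 0 ≤ (T ^ n) x y := by
  induction n generalizing x with
  | zero => simp only [pow_zero, Matrix.one_apply]; split_ifs <;> norm_num
  | succ n ih =>
    rw [pow_succ', Matrix.mul_apply]
    exact Finset.sum_nonneg fun z _ => mul_nonneg (hT _ _) (ih _)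

lemma ts_one_le {X : Type*} [Fintype X] [DecidableEq X] (E : X → X → Prop) [DecidableRel E]
    (hnb : ∀ x : X, ∃ x' : X, E x x')
    (T : Matrix X X ℝ) (hT : ∀ x x' : X, T x x' = if E x x' then 1 else 0) (n : ℕ) (x : X) :
    1 ≤ ∑ y, (T ^ n) x y := by
  have h0 : ∀ x x', 0 ≤ T x x' := fun x x' => by rw [hT]; split_ifs <;> norm_num
  induction n generalizing x with
  | zero => simp [Matrix.one_apply]
  | succ n ih =>
    have h1 : ∑ y, (T ^ (n+1)) x y = ∑ z, T x z * ∑ y, (T ^ n) z y := by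
      simp only [pow_succ', Matrix.mul_apply, Finset.mul_sum]
      rw [Finset.sum_comm]
    obtain ⟨z, hz⟩ := hnb x
    rw [h1]
    calc (1:ℝ) ≤ T x z * ∑ y, (T ^ n) z y := by rw [hT, if_pos hz, one_mul]; exact ih z
      _ ≤ _ := Finset.single_le_sum (f := fun z => T x z * ∑ y, (T ^ n) z y)
        (fun i _ => mul_nonneg (h0 _ _) (zero_le_one.trans (ih i))) (Finset.mem_univ z)

open scoped Matrix.Norms.Operator in
lemma ts_main {X : Type*} [Fintype X] [DecidableEq X] [Nonempty X]
    (T : Matrix X X ℝ) (h0 : ∀ x x' : X, 0 ≤ T x x')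
    (h1 : ∀ n x, 1 ≤ ∑ y, (T ^ n) x y) :
    ∃ g : ℕ → ℝ, (∀ n, 1 ≤ g n) ∧ (∀ n, g n ≤ ∑ x, ∑ y, (T ^ n) x y) ∧
      (∀ n, ∑ x, ∑ y, (T ^ n) x y ≤ Fintype.card X * g n) ∧
      Tendsto (fun n : ℕ => Real.log (g n) / n) atTop
        (𝓝 (Real.log (sSup ((fun z : ℂ => ‖z‖) '' spectrum ℂ (T.map Complex.ofReal))))) := by
  set A : Matrix X X ℂ := T.map Complex.ofReal with hA
  have hpow : ∀ n x y, (A ^ n) x y = (((T ^ n) x y : ℝ) : ℂ) := by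
    intro n x y
    have : A ^ n = (T ^ n).map Complex.ofReal := by
      have := (map_pow (Complex.ofRealHom.mapMatrix (m := X)) T n)
      exact this.symm
    rw [this]; rfl
  have hn := ts_nonneg T h0
  have hrow : ∀ n x, ((∑ y, ‖(A ^ n) x y‖₊ : NNReal) : ℝ) = ∑ y, (T ^ n) x y := by
    intro n x
    push_cast
    refine Finset.sum_congr rfl fun y _ => ?_
    rw [hpow, Complex.norm_real, Real.norm_of_nonneg (hn n x y)]
  have hle : ∀ n x, ∑ y, (T ^ n) x y ≤ ‖A ^ n‖ := by
    intro n x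
    rw [← hrow, Matrix.linfty_opNorm_def]
    exact_mod_cast Finset.le_sup (f := fun x => ∑ y, ‖(A ^ n) x y‖₊) (Finset.mem_univ x)
  have hex : ∀ n, ∃ x, ‖A ^ n‖ = ∑ y, (T ^ n) x y := by
    intro n
    obtain ⟨x, _, hx⟩ := Finset.exists_mem_eq_sup (Finset.univ : Finset X) Finset.univ_nonempty
      (fun x => ∑ y, ‖(A ^ n) x y‖₊)
    exact ⟨x, by rw [← hrow, Matrix.linfty_opNorm_def, hx]⟩
  have hg1 : ∀ n, 1 ≤ ‖A ^ n‖ := fun n => by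
    obtain ⟨x, hx⟩ := hex n
    rw [hx]; exact h1 n x
  refine ⟨fun n => ‖A ^ n‖, hg1, ?_, ?_, ?_⟩
  · intro n
    obtain ⟨x, hx⟩ := hex n
    simp only [hx]
    exact Finset.single_le_sum (f := fun x => ∑ y, (T ^ n) x y)
      (fun i _ => Finset.sum_nonneg fun y _ => hn n i y) (Finset.mem_univ x)
  · intro n
    have := Finset.sum_le_card_nsmul Finset.univ (fun x => ∑ y, (T ^ n) x y) _
      (fun x _ => hle n x)
    simpa using this
  · have : CompleteSpace (Matrix X X ℂ) := FiniteDimensional.complete ℂ _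
    have hgel := spectrum.pow_norm_pow_one_div_tendsto_nhds_spectralRadius A
    obtain ⟨k, hk, hke⟩ := spectrum.exists_nnnorm_eq_spectralRadius_of_nonempty
      (spectrum.nonempty A)
    have hs : sSup ((fun z : ℂ => ‖z‖) '' spectrum ℂ A) = ‖k‖ := by
      refine IsGreatest.csSup_eq ⟨⟨k, hk, rfl⟩, ?_⟩
      rintro _ ⟨z, hz, rfl⟩
      have : (‖z‖₊ : ENNReal) ≤ ‖k‖₊ := by
        rw [hke]; exact le_iSup₂ (α := ENNReal) z hz
      exact_mod_cast this
    rw [hs]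
    rw [← hke] at hgel
    have h2 := (ENNReal.tendsto_toReal ENNReal.coe_ne_top).comp hgel
    have h3 : Tendsto (fun n : ℕ => ‖A ^ n‖ ^ (1 / n : ℝ)) atTop (𝓝 ‖k‖) := by
      refine Tendsto.congr (fun n => ?_) h2
      simp only [Function.comp]
      rw [ENNReal.toReal_ofReal (by positivity)]
    have hk1 : 1 ≤ ‖k‖ := ge_of_tendsto' h3 fun n => Real.one_le_rpow (hg1 n) (by positivity)
    refine Tendsto.congr (fun n => ?_) (h3.log (by linarith))
    rw [Real.log_rpow (by linarith [hg1 n])]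
    ring

lemma ts_inj {X Y : Type*} [Fintype X] [Fintype Y]
    (E : X → X → Prop) (H : X → Y) (l : ℕ)
    (hdetect : ∀ (m : ℕ), l ≤ m → ∀ (r r' : Fin m → X),
      TSIsRun E r → TSIsRun E r' → H ∘ r = H ∘ r' →
      ∀ (h0 : 0 < m), r ⟨0, h0⟩ = r' ⟨0, h0⟩) (m : ℕ) (hm : l ≤ m) :
    Nat.card {r : Fin m → X // TSIsRun E r} ≤
      Nat.card {w : Fin m → Y | ∃ r : Fin m → X, TSIsRun E r ∧ w = H ∘ r} *
        Fintype.card X ^ l := by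
  have hc : Fintype.card X ^ l = Nat.card (Fin l → X) := by simp
  rw [hc, ← Nat.card_prod]
  refine Nat.card_le_card_of_injective
    (fun r => (⟨H ∘ r.1, r.1, r.2, rfl⟩, fun j => r.1 ⟨m - l + j, by omega⟩)) ?_
  rintro ⟨r, hr⟩ ⟨r', hr'⟩ h
  simp only [Prod.mk.injEq, Subtype.mk.injEq] at h ⊢
  obtain ⟨ha, hb⟩ := h
  funext ⟨i, hi⟩
  by_cases hil : i < m - l
  · have := hdetect (m - i) (by omega) (fun j => r ⟨i + j, by omega⟩)
      (fun j => r' ⟨i + j, by omega⟩) (fun j hj => hr (i + j) (by omega))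
      (fun j hj => hr' (i + j) (by omega))
      (funext fun j => congrFun ha ⟨i + j, by omega⟩) (by omega)
    simpa using this
  · have := congrFun hb ⟨i - (m - l), by omega⟩
    have e : m - l + (i - (m - l)) = i := by omega
    simpa [e] using this

lemma ts_le {X Y : Type*} [Fintype X] [Fintype Y]
    (E : X → X → Prop) (H : X → Y) (m : ℕ) :
    Nat.card {w : Fin m → Y | ∃ r : Fin m → X, TSIsRun E r ∧ w = H ∘ r} ≤
    Nat.card {r : Fin m → X // TSIsRun E r} := by
  refine Nat.card_le_card_of_surjective
    (fun r => ⟨H ∘ r.1, r.1, r.2, rfl⟩) ?_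
  rintro ⟨w, r, hr, rfl⟩
  exact ⟨⟨r, hr⟩, rfl⟩

end Helpers


/-- for a finite non-blocking `l`-detectable transition system, the
behavioral entropy `limsup (log N(n))/n` equals `log λ₁(T)`, where `T` is the
incidence matrix and `λ₁(T)` its largest eigenvalue modulus; in particular it equals
the internal entropy `limsup (log N'(n))/n`. -/
theorem behavioral_entropy_eq_log_spectral_radius
    {X Y : Type*} [Fintype X] [DecidableEq X] [Nonempty X] [Fintype Y]
    (E : X → X → Prop) [DecidableRel E]
    (hnonblocking : ∀ x : X, ∃ x' : X, E x x')
    (H : X → Y)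
    (l : ℕ)
    (hdetect : ∀ (m : ℕ), l ≤ m → ∀ (r r' : Fin m → X),
      TSIsRun E r → TSIsRun E r' → H ∘ r = H ∘ r' →
      ∀ (h0 : 0 < m), r ⟨0, h0⟩ = r' ⟨0, h0⟩)
    (N N' : ℕ → ℕ)
    (hN : ∀ m : ℕ, N m = Nat.card {w : Fin m → Y | ∃ r : Fin m → X, TSIsRun E r ∧ w = H ∘ r})
    (hN' : ∀ m : ℕ, N' m = Nat.card {r : Fin m → X // TSIsRun E r})
    (T : Matrix X X ℝ)
    (hT : ∀ x x' : X, T x x' = if E x x' then 1 else 0)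
    (lam1 : ℝ)
    (hlam1 : lam1 = sSup ((fun z : ℂ => ‖z‖) '' spectrum ℂ (T.map Complex.ofReal))) :
    Filter.limsup (fun m : ℕ => Real.log (N m) / m) atTop = Real.log lam1 ∧
    Filter.limsup (fun m : ℕ => Real.log (N m) / m) atTop =
      Filter.limsup (fun m : ℕ => Real.log (N' m) / m) atTop := by
  have h0 : ∀ x x', 0 ≤ T x x' := fun x x' => by rw [hT]; split_ifs <;> norm_num
  obtain ⟨g, hg1, hgl, hgu, hgt⟩ := ts_main T h0 (ts_one_le E hnonblocking T hT)
  rw [← hlam1] at hgt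
  have hcount : ∀ n, (N' (n+1) : ℝ) = ∑ x, ∑ y, (T ^ n) x y := fun n => by
    rw [hN', ts_count E T hT]
  have hcard : (0:ℝ) < Fintype.card X := by exact_mod_cast Fintype.card_pos
  have hconst : ∀ c : ℝ, Tendsto (fun n : ℕ => c / (n:ℝ)) atTop (𝓝 0) := fun c =>
    tendsto_const_div_atTop_nhds_zero_nat c
  have hshift : Tendsto (fun n : ℕ => Real.log (g n) / ((n + 1 : ℕ) : ℝ)) atTop
      (𝓝 (Real.log lam1)) := by
    have h := hgt.mul (tendsto_natCast_div_add_atTop (1:ℝ))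
    rw [mul_one] at h
    refine h.congr' ?_
    filter_upwards [eventually_gt_atTop 0] with n hn
    have : (n:ℝ) ≠ 0 := by positivity
    push_cast
    field_simp
  have hN't : Tendsto (fun m : ℕ => Real.log (N' m) / m) atTop (𝓝 (Real.log lam1)) := by
    rw [← tendsto_add_atTop_iff_nat 1]
    have hup := ((tendsto_add_atTop_iff_nat 1).2 (hconst (Real.log (Fintype.card X)))).add hshift
    rw [zero_add] at hup
    refine tendsto_of_tendsto_of_tendsto_of_le_of_le hshift hup (fun n => ?_) (fun n => ?_)
    · have := hg1 n
      have := hgl n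
      rw [← hcount] at this
      dsimp only
      gcongr
    · have h1 := hg1 n
      have h2 := hgu n
      have h3 := hgl n
      rw [← hcount] at h2 h3
      dsimp only
      rw [← add_div, ← Real.log_mul hcard.ne' (by linarith)]
      have : (0:ℝ) < N' (n+1) := by linarith
      gcongr
  have hNt : Tendsto (fun m : ℕ => Real.log (N m) / m) atTop (𝓝 (Real.log lam1)) := by
    have hlo := hN't.sub (hconst (Real.log ((Fintype.card X : ℝ) ^ l)))
    rw [sub_zero] at hlo
    have hpos : ∀ m, 0 < m → l ≤ m → (0:ℝ) < N' m ∧ (0:ℝ) < N m ∧ (N m : ℝ) ≤ N' m ∧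
        (N' m : ℝ) ≤ N m * (Fintype.card X : ℝ) ^ l := by
      intro m hm hl
      have a : (0:ℝ) < N' m := by
        obtain ⟨n, rfl⟩ := Nat.exists_eq_succ_of_ne_zero hm.ne'
        have h1 := hg1 n
        have h3 := hgl n
        rw [← hcount] at h3
        exact lt_of_lt_of_le (by linarith) h3
      have b : (N m : ℝ) ≤ N' m := by
        rw [hN, hN']; exact_mod_cast ts_le E H m
      have c : (N' m : ℝ) ≤ N m * (Fintype.card X : ℝ) ^ l := by
        rw [hN, hN']; exact_mod_cast ts_inj E H l hdetect m hl
      refine ⟨a, ?_, b, c⟩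
      exact pos_of_mul_pos_left (lt_of_lt_of_le a c) (by positivity)
    refine tendsto_of_tendsto_of_tendsto_of_le_of_le' hlo hN't ?_ ?_
    · filter_upwards [eventually_gt_atTop 0, eventually_ge_atTop l] with m hm hl
      obtain ⟨a, b, c, d⟩ := hpos m hm hl
      rw [← sub_div]
      gcongr
      rw [sub_le_iff_le_add, ← Real.log_mul b.ne' (by positivity)]
      gcongr
    · filter_upwards [eventually_gt_atTop 0, eventually_ge_atTop l] with m hm hl
      obtain ⟨a, b, c, d⟩ := hpos m hm hl
      gcongr
  exact ⟨hNt.limsup_eq, hNt.limsup_eq.trans hN't.limsup_eq.symm⟩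
end
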